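/- For every ε > 0 there exists C > 0 such that, for p ≥ C log n / n, the binomial random graph G = G_{n,p} asymptotically almost surely satisfies the following: for every i with εn ≤ i < n/2 there exist a partition of the vertex set V into disjoint sets X and Y with |X| = i and |Y| = n − i, and a subgraph H ⊆ G consisting of all edges of G with one endpoint in X and the other in Y, such that d_H(x) ≤ (n−i)p + εnp for all x ∈ X, d_H(y) ≤ ip + εnp for all y ∈ Y, and G ∖ H is not Hamiltonian (indeed it is disconnected). -/

import Mathlib

/-!
For each `i` take `X` to be the first `i` vertices and `Y` the rest. Removing all `X`–`Y` edges
disconnects the graph, hence destroys Hamiltonicity, so only the degree bounds need randomness.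

The degree of `v` across the cut at `i` is a binomial variable with `m ≤ n` trials, where `m` is
the size of the opposite side. Its moment generating function is `(1 + p (e^t - 1))^m`
(`sum_weight_mul_exp`), so for `t ≤ 1` and `2 t ≤ ε` it exceeds `m p + ε n p` with probability at
most `exp (-t² n p)` (`cut_exp_moment_le`). With `p ≥ 3 log n / (t² n)` this is at most `n⁻³`, and
a union bound over the at most `n²` pairs `(i, v)` (`one_sub_le_Pr_hasCuts`) leaves failure
probability at most `1 / n`.
-/

open Filter Real

namespace Resilience

variable {V : Type*}

/-- The degree of a vertex, as the cardinality of its neighbourhood. -/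
noncomputable def deg (G : SimpleGraph V) (v : V) : ℕ := (G.neighborSet v).ncard

/-- The neighbourhood of a set of vertices: all vertices with a neighbour in `X`. -/
def nbhd (G : SimpleGraph V) (X : Set V) : Set V := {v | ∃ x ∈ X, G.Adj v x}

/-- The minimum degree over a set of vertices. -/
noncomputable def minDeg (G : SimpleGraph V) (X : Set V) : ℕ :=
  sInf ((fun v => deg G v) '' X)

/-- The number of edges of `G` with one endpoint in `X` and the other in `Y`. -/
noncomputable def eBetween (G : SimpleGraph V) (X Y : Set V) : ℕ :=
  {e ∈ G.edgeSet | ∃ x ∈ X, ∃ y ∈ Y, e = s(x, y)}.ncard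

/-- The number of edges of `G` with both endpoints in `A`. -/
noncomputable def eIn (G : SimpleGraph V) (A : Set V) : ℕ :=
  {e ∈ G.edgeSet | ∀ v ∈ e, v ∈ A}.ncard

/-- The graph on `V` whose edges are the consecutive pairs of the list `l`;
this lets us view a path, recorded as a list of distinct vertices, as a graph. -/
def listGraph (l : List V) : SimpleGraph V :=
  SimpleGraph.fromEdgeSet {e | ∃ q ∈ l.zip l.tail, e = s(q.1, q.2)}

/-- `l` is a (nonempty) path on `V` all of whose edges lie in `G`. -/
def IsPathOn (G : SimpleGraph V) (l : List V) : Prop :=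
  l ≠ [] ∧ l.Nodup ∧ l.Chain' G.Adj

/-- `l` is a longest path with all edges in `G`. -/
def IsLongestPathOn (G : SimpleGraph V) (l : List V) : Prop :=
  IsPathOn G l ∧ ∀ l' : List V, IsPathOn G l' → l'.length ≤ l.length

/-- `l'` is obtained from the path `l` (with fixed last endpoint) by a single rotation
within `G`, whose broken edge lies on the original path `P`.  Writing
`l = a :: t₁ ++ c :: b :: t₂`, the pivot is `b`, the new edge is `ab ∈ G`, the broken
edge is `cb` (an edge of `P`), and the rotated path is `(a :: t₁ ++ [c]).reverse ++ b :: t₂`. -/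
def IsRotation (G : SimpleGraph V) (P l l' : List V) : Prop :=
  ∃ (a c b : V) (t₁ t₂ : List V),
    l = a :: t₁ ++ c :: b :: t₂ ∧ G.Adj a b ∧ (listGraph P).Adj c b ∧
    l' = (a :: t₁ ++ [c]).reverse ++ b :: t₂

/-- The set of paths obtainable from `P` by at most `t` successive rotations within `G`
with fixed last endpoint, all broken edges lying on `P`. -/
def rotSet (G : SimpleGraph V) (P : List V) : ℕ → Set (List V)
  | 0 => {P}
  | t + 1 => rotSet G P t ∪ {l' | ∃ l ∈ rotSet G P t, IsRotation G P l l'}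

/-- `R^t_{G,P,u}`: the set of endpoints of paths obtainable from `P` by at most `t`
successive rotations within `G` with fixed last endpoint. -/
def Rset (G : SimpleGraph V) (P : List V) (t : ℕ) : Set V :=
  {x | ∃ l ∈ rotSet G P t, l.head? = some x}

/-- The family `H^ε_{n,p}` of Pósa-type subgraphs: there is an ordering of the vertices
with non-increasing degrees such that `d_H(v_i) ≤ (n-i)p - εnp` for all `i < n/2`
(1-based indexing). -/
def PosaFamily (n : ℕ) (p ε : ℝ) (H : SimpleGraph (Fin n)) : Prop :=
  ∃ v : Fin n → Fin n, Function.Bijective v ∧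
    (∀ i j : Fin n, i ≤ j → deg H (v j) ≤ deg H (v i)) ∧
    ∀ i : Fin n, ((i.1 : ℝ) + 1) < n / 2 →
      (deg H (v i) : ℝ) ≤ ((n : ℝ) - ((i.1 : ℝ) + 1)) * p - ε * n * p

/-- The family `H^{ε,δ}_{n,p}` of (shifted) Chvátal-type subgraphs, where the shift
`δn` is recorded as a natural number `s`: there is an ordering of the vertices with
non-increasing degrees such that for all `i < n/2` (1-based indexing), either
`d_H(v_i) ≤ (n-i)p - εnp` or `d_H(v_{n-i-s}) ≤ ip - εnp`. -/
def ChvatalFamily (n : ℕ) (p ε : ℝ) (s : ℕ) (H : SimpleGraph (Fin n)) : Prop :=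
  ∃ v : Fin n → Fin n, Function.Bijective v ∧
    (∀ i j : Fin n, i ≤ j → deg H (v j) ≤ deg H (v i)) ∧
    ∀ i : Fin n, ((i.1 : ℝ) + 1) < n / 2 →
      ((deg H (v i) : ℝ) ≤ ((n : ℝ) - ((i.1 : ℝ) + 1)) * p - ε * n * p ∨
       (deg H (v ⟨n - (i.1 + 1) - s - 1, by have := i.2; omega⟩) : ℝ) ≤
         ((i.1 : ℝ) + 1) * p - ε * n * p)

/-- The probability weight of a fixed graph `G` in the binomial random graph `G_{n,p}`. -/
noncomputable def weight (n : ℕ) (p : ℝ) (G : SimpleGraph (Fin n)) : ℝ :=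
  p ^ G.edgeSet.ncard * (1 - p) ^ (n.choose 2 - G.edgeSet.ncard)

open Classical in
/-- The probability that the binomial random graph `G_{n,p}` satisfies the property `Q`. -/
noncomputable def Pr (n : ℕ) (p : ℝ) (Q : SimpleGraph (Fin n) → Prop) : ℝ :=
  ∑ G : SimpleGraph (Fin n), if Q G then weight n p G else 0

/-- Property `RE(δ)` for a (connected) graph `G` on `n` vertices: for every path `P`
on the vertex set, either `G ∪ P` has a longer path, or there are at least `δn` vertices
`v`, each with a set `T v` of at least `δn` vertices `w`, such that `G ∪ P` has a path
from `v` to `w` with the same vertex set as `P`. -/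
def RE (n : ℕ) (δ : ℝ) (G : SimpleGraph (Fin n)) : Prop :=
  G.Connected ∧
  ∀ P : List (Fin n), P ≠ [] → P.Nodup →
    (∃ Q : List (Fin n), IsPathOn (G ⊔ listGraph P) Q ∧ P.length < Q.length) ∨
    (∃ S : Set (Fin n), δ * n ≤ S.ncard ∧
      ∃ T : Fin n → Set (Fin n), (∀ v ∈ S, δ * n ≤ (T v).ncard) ∧
        ∀ v ∈ S, ∀ w ∈ T v, ∃ Q : List (Fin n),
          IsPathOn (G ⊔ listGraph P) Q ∧ Q.head? = some v ∧ Q.getLast? = some w ∧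
          Q.toFinset = P.toFinset)

/-- `G₂` complements `G₁` (with respect to parameter `δ` as in `RE(δ)`): for every path
`P` on the vertex set, either `G₁ ∪ P` has a longer path, or there are sets `S`, `T v`
as in the definition of `RE(δ)` together with `v ∈ S` and `w ∈ T v` such that `vw` is an
edge of `G₁ ∪ G₂`. -/
def Complements (n : ℕ) (δ : ℝ) (G₁ G₂ : SimpleGraph (Fin n)) : Prop :=
  ∀ P : List (Fin n), P ≠ [] → P.Nodup →
    (∃ Q : List (Fin n), IsPathOn (G₁ ⊔ listGraph P) Q ∧ P.length < Q.length) ∨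
    (∃ S : Set (Fin n), δ * n ≤ S.ncard ∧
      ∃ T : Fin n → Set (Fin n), (∀ v ∈ S, δ * n ≤ (T v).ncard) ∧
        (∀ v ∈ S, ∀ w ∈ T v, ∃ Q : List (Fin n),
          IsPathOn (G₁ ⊔ listGraph P) Q ∧ Q.head? = some v ∧ Q.getLast? = some w ∧
          Q.toFinset = P.toFinset) ∧
        ∃ v ∈ S, ∃ w ∈ T v, (G₁ ⊔ G₂).Adj v w)


/-! ### The moment generating function of an edge count -/

open Classical in
/-- Expanding the product over all pairs `e` of `(p e^t + 1 - p)` or `(p + 1 - p)` over the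
subsets of pairs gives the exponential moment of the number of edges of `G_{n,p}` in `F`. -/
lemma sum_weight_mul_exp (n : ℕ) (p t : ℝ) (F : Finset (Sym2 (Fin n)))
    (hF : F ⊆ (⊤ : SimpleGraph (Fin n)).edgeFinset) :
    ∑ G : SimpleGraph (Fin n), weight n p G * exp (t * ((G.edgeFinset ∩ F).card : ℝ))
      = (1 + p * (exp t - 1)) ^ F.card := by
  set E := (⊤ : SimpleGraph (Fin n)).edgeFinset with hE
  have hEc : E.card = n.choose 2 := by
    rw [hE, SimpleGraph.card_edgeFinset_top_eq_card_choose_two, Fintype.card_fin]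
  have h1 : ∏ e ∈ E, ((p * if e ∈ F then exp t else 1) + (1 - p))
      = (1 + p * (exp t - 1)) ^ F.card := by
    have : ∀ e ∈ E, ((p * if e ∈ F then exp t else 1) + (1 - p))
        = if e ∈ F then 1 + p * (exp t - 1) else 1 := by
      intro e _
      split_ifs <;> ring
    rw [Finset.prod_congr rfl this, Finset.prod_ite_mem, Finset.inter_eq_right.mpr hF,
      Finset.prod_const]
  rw [← h1, Finset.prod_add]
  refine Finset.sum_bij' (fun G _ => G.edgeFinset)
    (fun S _ => SimpleGraph.fromEdgeSet (S : Set (Sym2 (Fin n)))) ?_ ?_ ?_ ?_ ?_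
  · intro G _
    rw [Finset.mem_powerset]
    exact SimpleGraph.edgeFinset_mono le_top
  · intro S _
    exact Finset.mem_univ _
  · intro G _
    simp
  · intro S hS
    ext e
    rw [Finset.mem_powerset] at hS
    simp only [SimpleGraph.mem_edgeFinset, SimpleGraph.edgeSet_fromEdgeSet, Set.mem_sdiff,
      Finset.mem_coe]
    constructor
    · exact fun h => h.1
    · intro h
      refine ⟨h, ?_⟩
      have := hS h
      rw [hE, SimpleGraph.mem_edgeFinset] at this
      exact SimpleGraph.not_isDiag_of_mem_edgeSet _ this
  · intro G _
    have hsub : G.edgeFinset ⊆ E := SimpleGraph.edgeFinset_mono le_top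
    have hc : G.edgeSet.ncard = G.edgeFinset.card := by
      rw [← SimpleGraph.coe_edgeFinset, Set.ncard_coe_finset]
    rw [Finset.prod_mul_distrib, Finset.prod_const, Finset.prod_const, Finset.prod_ite_mem,
      Finset.prod_const, Finset.card_sdiff_of_subset hsub, hEc, weight, hc, mul_comm t,
      Real.exp_nat_mul]
    ring

lemma sum_weight (n : ℕ) (p : ℝ) : ∑ G : SimpleGraph (Fin n), weight n p G = 1 := by
  simpa using sum_weight_mul_exp n p 0 ∅ (Finset.empty_subset _)

lemma weight_nonneg (n : ℕ) (p : ℝ) (h0 : 0 ≤ p) (h1 : p ≤ 1) (G : SimpleGraph (Fin n)) :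
    0 ≤ weight n p G :=
  mul_nonneg (pow_nonneg h0 _) (pow_nonneg (by linarith) _)

/-! ### Chernoff bound for cut degrees -/

/-- The vertices on the other side from `v` in the cut `{w | w < i}`, `{w | i ≤ w}`. -/
def oppSide (n i : ℕ) (v : Fin n) : Finset (Fin n) :=
  Finset.univ.filter (fun w => ¬ (w.1 < i ↔ v.1 < i))

/-- The pairs joining `v` to the opposite side of the cut at `i`. -/
def cutStar (n i : ℕ) (v : Fin n) : Finset (Sym2 (Fin n)) :=
  (oppSide n i v).image (fun w => s(v, w))

lemma cutStar_card (n i : ℕ) (v : Fin n) : (cutStar n i v).card = (oppSide n i v).card := by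
  apply Finset.card_image_of_injective
  intro a b h
  exact Sym2.congr_right.mp h

open Classical in
lemma cutStar_subset (n i : ℕ) (v : Fin n) :
    cutStar n i v ⊆ (⊤ : SimpleGraph (Fin n)).edgeFinset := by
  intro e he
  simp only [cutStar, oppSide, Finset.mem_image, Finset.mem_filter] at he
  obtain ⟨w, ⟨_, hw⟩, rfl⟩ := he
  rw [SimpleGraph.mem_edgeFinset, SimpleGraph.mem_edgeSet, SimpleGraph.top_adj]
  rintro rfl
  exact hw Iff.rfl

open Classical in
/-- Markov's inequality is already built in: the left side dominates the probability that the
cut degree of `v` exceeds its mean by `ε n p`. -/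
lemma cut_exp_moment_le (n i : ℕ) (v : Fin n) (p ε t : ℝ) (h0 : 0 ≤ p)
    (ht0 : 0 < t) (ht1 : t ≤ 1) (htε : 2 * t ≤ ε) :
    ∑ G : SimpleGraph (Fin n), weight n p G *
        exp (t * (((G.edgeFinset ∩ cutStar n i v).card : ℝ)
          - ((oppSide n i v).card * p + ε * n * p)))
      ≤ exp (-(t ^ 2 * (n * p))) := by
  set m : ℝ := ((oppSide n i v).card : ℝ) with hm
  have hmn : m ≤ n := by
    have := Finset.card_le_univ (oppSide n i v)
    rw [Fintype.card_fin] at this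
    rw [hm]
    exact_mod_cast this
  have hm0 : 0 ≤ m := Nat.cast_nonneg _
  have hexp : exp t - 1 - t ≤ t ^ 2 :=
    le_trans (le_abs_self _) (by
      simpa [abs_of_pos ht0] using Real.abs_exp_sub_one_sub_id_le (x := t)
        (by rw [abs_of_pos ht0]; exact ht1))
  have hsplit : ∀ G : SimpleGraph (Fin n), weight n p G *
        exp (t * (((G.edgeFinset ∩ cutStar n i v).card : ℝ) - (m * p + ε * n * p)))
      = (weight n p G * exp (t * ((G.edgeFinset ∩ cutStar n i v).card : ℝ)))
        * exp (-(t * (m * p + ε * n * p))) := by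
    intro G
    rw [mul_assoc (weight n p G), ← Real.exp_add, mul_sub, sub_eq_add_neg]
  rw [Finset.sum_congr rfl (fun G _ => hsplit G), ← Finset.sum_mul,
    sum_weight_mul_exp n p t _ (cutStar_subset n i v), cutStar_card]
  have hbase : (1 + p * (exp t - 1)) ^ (oppSide n i v).card ≤ exp (m * (p * (exp t - 1))) := by
    rw [hm, Real.exp_nat_mul]
    have : 0 ≤ exp t - 1 := by linarith [Real.add_one_le_exp t]
    apply pow_le_pow_left₀ (by positivity)
    linarith [Real.add_one_le_exp (p * (exp t - 1))]
  refine (mul_le_mul_of_nonneg_right hbase (Real.exp_pos _).le).trans ?_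
  rw [← Real.exp_add, Real.exp_le_exp]
  have a1 : m * p * (exp t - 1 - t) ≤ n * p * t ^ 2 :=
    (mul_le_mul_of_nonneg_left hexp (by positivity)).trans
      (mul_le_mul_of_nonneg_right (mul_le_mul_of_nonneg_right hmn h0) (by positivity))
  have a2 : n * p * t * (2 * t) ≤ n * p * t * ε :=
    mul_le_mul_of_nonneg_left htε (by positivity)
  nlinarith

/-! ### The deterministic part -/

/-- A graph with no edge between two nonempty sets covering the vertices is disconnected. -/
lemma not_connected_of_cut {W : Type*} (K : SimpleGraph W) (X : Set W)
    (a b : W) (ha : a ∈ X) (hb : b ∉ X) (h : ∀ v w, K.Adj v w → v ∈ X → w ∈ X) :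
    ¬ K.Connected := by
  intro hc
  obtain ⟨q⟩ := hc.preconnected a b
  have : ∀ {u w : W}, K.Walk u w → u ∈ X → w ∈ X := by
    intro u w q
    induction q with
    | nil => exact id
    | cons hadj _ ih => exact fun hu => ih (h _ _ hadj hu)
  exact hb (this q ha)

lemma ncard_initial (n i : ℕ) (hi : i ≤ n) : {w : Fin n | w.1 < i}.ncard = i := by
  have : {w : Fin n | w.1 < i} = Set.range (Fin.castLE hi) := by
    ext w
    constructor
    · intro hw
      exact ⟨⟨w.1, hw⟩, rfl⟩
    · rintro ⟨u, rfl⟩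
      exact u.2
  rw [this, ← Set.image_univ, Set.ncard_image_of_injective _ (Fin.castLE_injective hi)]
  simp [Set.ncard_univ]

lemma ncard_final (n i : ℕ) (hi : i ≤ n) : {w : Fin n | ¬ w.1 < i}.ncard = n - i := by
  have h := Set.ncard_add_ncard_compl {w : Fin n | w.1 < i}
  rw [ncard_initial n i hi, Nat.card_eq_fintype_card, Fintype.card_fin] at h
  have h' : {w : Fin n | ¬ w.1 < i} = {w : Fin n | w.1 < i}ᶜ := rfl
  rw [h']
  omega

lemma oppSide_card (n i : ℕ) (hi : i ≤ n) (v : Fin n) :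
    (oppSide n i v).card = if v.1 < i then n - i else i := by
  rw [← Set.ncard_coe_finset]
  split_ifs with hv
  · rw [← ncard_final n i hi]
    congr 1
    ext w
    simp [oppSide, hv]
  · conv_rhs => rw [← ncard_initial n i hi]
    congr 1
    ext w
    simp [oppSide, hv]

open Classical in
lemma deg_le_cutStar (n i : ℕ) (G H : SimpleGraph (Fin n)) (v : Fin n)
    (hH : ∀ w, H.Adj v w → G.Adj v w ∧ ¬ (w.1 < i ↔ v.1 < i)) :
    deg H v ≤ (G.edgeFinset ∩ cutStar n i v).card := by
  have hinj : Function.Injective (fun w : Fin n => s(v, w)) :=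
    fun a b h => Sym2.congr_right.mp h
  rw [deg, ← Set.ncard_image_of_injective _ hinj, ← Set.ncard_coe_finset]
  apply Set.ncard_le_ncard _ (Finset.finite_toSet _)
  rintro _ ⟨w, hw, rfl⟩
  have := hH w hw
  simp only [Finset.coe_inter, Set.mem_inter_iff, Finset.mem_coe, SimpleGraph.mem_edgeFinset,
    SimpleGraph.mem_edgeSet, cutStar, oppSide, Finset.mem_image, Finset.mem_filter]
  exact ⟨this.1, w, ⟨Finset.mem_univ _, this.2⟩, rfl⟩

/-- The property whose probability the theorem bounds from below. -/
def HasCuts (n : ℕ) (p ε : ℝ) (G : SimpleGraph (Fin n)) : Prop :=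
  ∀ i : ℕ, ε * n ≤ (i : ℝ) → (i : ℝ) < n / 2 →
    ∃ X Y : Set (Fin n), Disjoint X Y ∧ X ∪ Y = Set.univ ∧
      X.ncard = i ∧ Y.ncard = n - i ∧
      ∃ H : SimpleGraph (Fin n),
        (∀ v w : Fin n, H.Adj v w ↔
          (G.Adj v w ∧ ((v ∈ X ∧ w ∈ Y) ∨ (v ∈ Y ∧ w ∈ X)))) ∧
        (∀ x ∈ X, (deg H x : ℝ) ≤ ((n : ℝ) - i) * p + ε * n * p) ∧
        (∀ y ∈ Y, (deg H y : ℝ) ≤ (i : ℝ) * p + ε * n * p) ∧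
        ¬ (G \ H).IsHamiltonian ∧ ¬ (G \ H).Connected

open Classical in
/-- If no vertex has a large degree across any of the cuts at `i < n`, these cuts witness the
property. -/
lemma hasCuts_of_cut_degrees (n : ℕ) (hn : 0 < n) (p ε : ℝ) (hε : 0 < ε)
    (G : SimpleGraph (Fin n))
    (hG : ∀ i < n, ∀ v : Fin n, ((G.edgeFinset ∩ cutStar n i v).card : ℝ)
      ≤ (oppSide n i v).card * p + ε * n * p) : HasCuts n p ε G := by
  intro i hi1 hi2
  have hnR : (0 : ℝ) < n := by exact_mod_cast hn
  have hipos : 0 < i := by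
    have : (0 : ℝ) < i := lt_of_lt_of_le (by positivity) hi1
    exact_mod_cast this
  have hin : i < n := by
    have : (i : ℝ) < n := by linarith
    exact_mod_cast this
  let H : SimpleGraph (Fin n) :=
    { Adj := fun v w => G.Adj v w ∧ ¬ (w.1 < i ↔ v.1 < i)
      symm := ⟨fun v w h => ⟨h.1.symm, fun h' => h.2 h'.symm⟩⟩
      loopless := ⟨fun v h => h.2 Iff.rfl⟩ }
  have hdeg : ∀ v : Fin n, (deg H v : ℝ) ≤ (oppSide n i v).card * p + ε * n * p := fun v =>
    le_trans (by exact_mod_cast deg_le_cutStar n i G H v (fun w h => h)) (hG i hin v)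
  have hdisc : ¬ (G \ H).Connected := by
    refine not_connected_of_cut (G \ H) {w | w.1 < i} ⟨0, hn⟩ ⟨i, hin⟩ hipos
      (by simp) ?_
    intro v w hvw hv
    rw [SimpleGraph.sdiff_adj] at hvw
    by_contra hw
    exact hvw.2 ⟨hvw.1, fun h => hw (h.mpr hv)⟩
  refine ⟨{w | w.1 < i}, {w | ¬ w.1 < i}, ?_, ?_, ncard_initial n i hin.le,
    ncard_final n i hin.le, H, ?_, ?_, ?_, ?_, hdisc⟩
  · rw [Set.disjoint_left]
    exact fun w h h' => h' h
  · ext w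
    simp only [Set.mem_union, Set.mem_ofPred_eq, Set.mem_univ, iff_true]
    exact Classical.em _
  · intro v w
    change (G.Adj v w ∧ ¬ (w.1 < i ↔ v.1 < i)) ↔ _
    simp only [Set.mem_ofPred_eq]
    tauto
  · intro x hx
    have h := hdeg x
    rw [oppSide_card n i hin.le, if_pos (show x.1 < i from hx), Nat.cast_sub hin.le] at h
    exact h
  · intro y hy
    have h := hdeg y
    rwa [oppSide_card n i hin.le, if_neg (show ¬ y.1 < i from hy)] at h
  · exact fun h => hdisc h.connected

open Classical in
/-- Union bound over the `n` cuts and `n` vertices. -/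
lemma one_sub_le_Pr_hasCuts (n : ℕ) (hn : 0 < n) (p ε t : ℝ) (hε : 0 < ε) (h0 : 0 ≤ p)
    (h1 : p ≤ 1) (ht0 : 0 < t) (ht1 : t ≤ 1) (htε : 2 * t ≤ ε) :
    1 - n * (n * exp (-(t ^ 2 * (n * p)))) ≤ Pr n p (HasCuts n p ε) := by
  let T : ℕ → Fin n → SimpleGraph (Fin n) → ℝ := fun i v G => weight n p G *
    exp (t * (((G.edgeFinset ∩ cutStar n i v).card : ℝ)
      - ((oppSide n i v).card * p + ε * n * p)))
  have hT : ∀ i v G, 0 ≤ T i v G := fun i v G =>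
    mul_nonneg (weight_nonneg n p h0 h1 G) (Real.exp_pos _).le
  have key : ∀ G : SimpleGraph (Fin n), weight n p G ≤
      (if HasCuts n p ε G then weight n p G else 0)
        + ∑ i ∈ Finset.range n, ∑ v : Fin n, T i v G := by
    intro G
    have hS : 0 ≤ ∑ i ∈ Finset.range n, ∑ v : Fin n, T i v G :=
      Finset.sum_nonneg fun i _ => Finset.sum_nonneg fun v _ => hT i v G
    split_ifs with hQ
    · linarith
    · have : ∃ i < n, ∃ v : Fin n, (oppSide n i v).card * p + ε * n * p
          < ((G.edgeFinset ∩ cutStar n i v).card : ℝ) := by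
        by_contra! hcon
        exact hQ (hasCuts_of_cut_degrees n hn p ε hε G hcon)
      obtain ⟨i, hi, v, hv⟩ := this
      have b1 : T i v G ≤ ∑ v : Fin n, T i v G :=
        Finset.single_le_sum (f := fun v => T i v G) (fun v _ => hT i v G) (Finset.mem_univ v)
      have b2 : ∑ v : Fin n, T i v G ≤ ∑ i ∈ Finset.range n, ∑ v : Fin n, T i v G :=
        Finset.single_le_sum (f := fun i => ∑ v : Fin n, T i v G)
          (fun i _ => Finset.sum_nonneg fun v _ => hT i v G) (Finset.mem_range.mpr hi)
      have b3 : weight n p G ≤ T i v G :=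
        le_mul_of_one_le_right (weight_nonneg n p h0 h1 G)
          (Real.one_le_exp (mul_nonneg ht0.le (by linarith)))
      linarith
  have hsum := Finset.sum_le_sum fun G (_ : G ∈ Finset.univ) => key G
  rw [sum_weight, Finset.sum_add_distrib, Finset.sum_comm] at hsum
  have hbad : ∑ i ∈ Finset.range n, ∑ G : SimpleGraph (Fin n), ∑ v : Fin n, T i v G
      ≤ n * (n * exp (-(t ^ 2 * (n * p)))) := by
    calc _ ≤ ∑ i ∈ Finset.range n, ∑ v : Fin n, exp (-(t ^ 2 * (n * p))) := by
          refine Finset.sum_le_sum fun i _ => ?_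
          rw [Finset.sum_comm]
          exact Finset.sum_le_sum fun v _ => cut_exp_moment_le n i v p ε t h0 ht0 ht1 htε
      _ = _ := by simp
  rw [Pr]
  linarith

/-- the extremal construction.  For every `ε > 0` there exists
`C > 0` such that, for `p ≥ C log n / n`, a.a.s. for every `i` with `εn ≤ i < n/2`
there are a partition `V = X ∪ Y` with `|X| = i`, `|Y| = n − i` and the bipartite
subgraph `H` of `G` between `X` and `Y` satisfying `d_H(x) ≤ (n−i)p + εnp` for
`x ∈ X`, `d_H(y) ≤ ip + εnp` for `y ∈ Y`, and `G ∖ H` is not Hamiltonian (indeed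
disconnected). -/
theorem extremal_construction (ε : ℝ) (hε : 0 < ε) :
    ∃ C : ℝ, 0 < C ∧ ∀ η : ℝ, 0 < η → ∃ N : ℕ, ∀ n : ℕ, N ≤ n →
      ∀ p : ℝ, C * Real.log n / n ≤ p → p ≤ 1 →
        1 - η ≤ Pr n p (fun G =>
          ∀ i : ℕ, ε * n ≤ (i : ℝ) → (i : ℝ) < n / 2 →
            ∃ X Y : Set (Fin n), Disjoint X Y ∧ X ∪ Y = Set.univ ∧
              X.ncard = i ∧ Y.ncard = n - i ∧
              ∃ H : SimpleGraph (Fin n),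
                (∀ v w : Fin n, H.Adj v w ↔
                  (G.Adj v w ∧ ((v ∈ X ∧ w ∈ Y) ∨ (v ∈ Y ∧ w ∈ X)))) ∧
                (∀ x ∈ X, (deg H x : ℝ) ≤ ((n : ℝ) - i) * p + ε * n * p) ∧
                (∀ y ∈ Y, (deg H y : ℝ) ≤ (i : ℝ) * p + ε * n * p) ∧
                ¬ (G \ H).IsHamiltonian ∧ ¬ (G \ H).Connected) := by
  -- `t` is the exponent in the Chernoff bound; `C t² = 3` beats the `n²` terms of the union bound
  set t : ℝ := min (ε / 2) 1 with ht
  have ht0 : 0 < t := lt_min (by linarith) one_pos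
  have ht1 : t ≤ 1 := min_le_right _ _
  have htε : 2 * t ≤ ε := by linarith [min_le_left (ε / 2) 1]
  refine ⟨3 / t ^ 2, by positivity, fun η hη => ?_⟩
  obtain ⟨N, hN⟩ := exists_nat_gt (1 / η)
  refine ⟨N + 1, fun n hn p hp hp1 => ?_⟩
  have hn0 : 0 < n := by omega
  have hnR : (0 : ℝ) < n := by exact_mod_cast hn0
  have hlog : 0 ≤ Real.log n := Real.log_natCast_nonneg n
  have hp0 : 0 ≤ p := le_trans (by positivity) hp
  refine le_trans ?_ (one_sub_le_Pr_hasCuts n hn0 p ε t hε hp0 hp1 ht0 ht1 htε)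
  have hnp : 3 * Real.log n ≤ t ^ 2 * (n * p) := by
    rw [div_le_iff₀ hnR] at hp
    calc 3 * Real.log n = t ^ 2 * (3 / t ^ 2 * Real.log n) := by field_simp
      _ ≤ t ^ 2 * (p * n) := by gcongr
      _ = _ := by ring
  have hexp : exp (-(t ^ 2 * (n * p))) ≤ ((n : ℝ) ^ 3)⁻¹ := by
    calc exp (-(t ^ 2 * (n * p))) ≤ exp (-(3 * Real.log n)) := Real.exp_le_exp.mpr (by linarith)
      _ = ((n : ℝ) ^ 3)⁻¹ := by
        rw [Real.exp_neg, show (3 : ℝ) * Real.log n = ((3 : ℕ) : ℝ) * Real.log n by norm_num,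
          Real.exp_nat_mul, Real.exp_log hnR]
  have hNn : (N : ℝ) ≤ n := by exact_mod_cast (by omega : N ≤ n)
  have hη' : 1 / (n : ℝ) ≤ η := by
    rw [div_le_iff₀ hnR]
    rw [div_lt_iff₀ hη] at hN
    nlinarith
  have : (n : ℝ) * (n * exp (-(t ^ 2 * (n * p)))) ≤ 1 / n := by
    calc (n : ℝ) * (n * exp (-(t ^ 2 * (n * p)))) ≤ n * (n * ((n : ℝ) ^ 3)⁻¹) := by gcongr
      _ = 1 / n := by field_simp
  linarith

end Resilience
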